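/- arXiv:math/0208219 — 2 statements merged into one kernel-verified Lean document; each statement's English description precedes it below -/
import Mathlib

section
/- If S_{v_1} and S_{v_2} are nonempty strata and S_{v_1} is contained in the closure of S_{v_2} in ℝ^n, then l(v_1) ≥ l(v_2) and l(v_1) − l(v_2) is an even integer. -/
open Polynomial

/-- The monic polynomial `P_a(x) = x^n + a_1 x^{n-1} + … + a_n`. -/
noncomputable def Ppoly (n : ℕ) (a : Fin n → ℝ) : Polynomial ℝ :=
  X ^ n + ∑ i : Fin n, C (a i) * X ^ (n - 1 - (i : ℕ))

/-- The multiplicity vector of `P_a`: the multiplicities of the distinct real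
roots of `P_a`, listed in increasing order of the roots. -/
noncomputable def MV (n : ℕ) (a : Fin n → ℝ) : List ℕ :=
  ((Ppoly n a).roots.toFinset.sort (· ≤ ·)).map fun x => (Ppoly n a).rootMultiplicity x

/-- The stratum of `ℝ^n` associated with a multiplicity vector `v`. -/
def Stratum (n : ℕ) (v : List ℕ) : Set (Fin n → ℝ) := {a | MV n a = v}

/-! The number of real roots, counted with multiplicity, is upper semicontinuous on polynomials of
fixed degree: as the coefficients converge, Cauchy's bound keeps the roots in a compact set, so some
root converges along an ultrafilter, its limit is a root of the limit polynomial, and splitting off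
the corresponding linear factors lowers the degree while preserving convergence. The parity claim
holds because dividing out all real roots leaves a product of irreducible quadratics. -/

section RealClosed

theorem exists_isRoot_of_odd_natDegree {p : ℝ[X]} (hp : Odd p.natDegree) : ∃ x, p.IsRoot x := by
  induction p using WfDvdMonoid.induction_on_irreducible with
  | zero => simp at hp
  | unit u hu => simp [natDegree_eq_zero_of_isUnit hu] at hp
  | mul f g hf hg ih =>
    rw [natDegree_mul hg.ne_zero hf, Nat.odd_add'] at hp
    by_cases hf_odd : Odd f.natDegree
    · exact (ih hf_odd).imp fun x hx => root_mul_left_of_isRoot g hx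
    · have hg_deg : g.natDegree = 1 := by grind [hg.natDegree_le_two]
      obtain ⟨x, hx⟩ := exists_root_of_degree_eq_one
        ((degree_eq_iff_natDegree_eq hg.ne_zero).2 hg_deg)
      exact ⟨x, root_mul_right_of_isRoot f hx⟩

instance isRealClosed_real : IsRealClosed ℝ :=
  .of_linearOrderedField Real.isSquare_iff.2 exists_isRoot_of_odd_natDegree

theorem even_natDegree_sub_card_roots {R : Type*} [Field R] [IsRealClosed R] (p : R[X]) :
    Even (p.natDegree - p.roots.card) := by
  obtain ⟨q, -, hdeg, hroots⟩ := exists_prod_multiset_X_sub_C_mul p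
  rw [← hdeg, Nat.add_sub_cancel_left, ← Nat.not_odd_iff_even]
  intro hq_odd
  obtain ⟨x, hx⟩ := IsRealClosed.exists_isRoot_of_odd_natDegree hq_odd
  have hq : q ≠ 0 := by rintro rfl; simp at hq_odd
  simpa [hroots] using (mem_roots hq).2 hx

end RealClosed

section CoefficientwiseLimit

open Filter Topology

theorem card_roots_eq_card_roots_divByMonic_add_one {R : Type*} [CommRing R] [IsDomain R]
    {p : R[X]} (hp : p ≠ 0) {x : R} (hx : p.IsRoot x) :
    p.roots.card = (p /ₘ (X - C x)).roots.card + 1 := by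
  have hfactor : (X - C x) * (p /ₘ (X - C x)) = p := mul_divByMonic_eq_iff_isRoot.2 hx
  calc p.roots.card = ((X - C x) * (p /ₘ (X - C x))).roots.card := by rw [hfactor]
    _ = (p /ₘ (X - C x)).roots.card + 1 := by
      rw [roots_mul (hfactor.symm ▸ hp), roots_X_sub_C, Multiset.card_add,
        Multiset.card_singleton, add_comm]

variable {ι : Type*} {l : Filter ι}

section TopologicalRing

variable {R : Type*} [TopologicalSpace R]

theorem tendsto_eval_of_tendsto_coeff [Semiring R] [IsTopologicalSemiring R]
    {p : ι → R[X]} {q : R[X]} {x : ι → R} {a : R}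
    (hdeg : ∀ᶠ i in l, (p i).natDegree = q.natDegree)
    (hcoeff : ∀ j, Tendsto (fun i => (p i).coeff j) l (𝓝 (q.coeff j)))
    (hx : Tendsto x l (𝓝 a)) : Tendsto (fun i => (p i).eval (x i)) l (𝓝 (q.eval a)) := by
  rw [eval_eq_sum_range]
  refine (tendsto_finsetSum (Finset.range (q.natDegree + 1)) fun j _ =>
    (hcoeff j).mul (hx.pow j)).congr' ?_
  filter_upwards [hdeg] with i hi
  rw [eval_eq_sum_range, hi]

theorem tendsto_coeff_divByMonic_X_sub_C [Ring R] [IsTopologicalRing R]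
    {p : ι → R[X]} {q : R[X]} {x : ι → R} {a : R}
    (hdeg : ∀ᶠ i in l, (p i).natDegree = q.natDegree)
    (hcoeff : ∀ j, Tendsto (fun i => (p i).coeff j) l (𝓝 (q.coeff j)))
    (hx : Tendsto x l (𝓝 a)) (j : ℕ) :
    Tendsto (fun i => (p i /ₘ (X - C (x i))).coeff j) l (𝓝 ((q /ₘ (X - C a)).coeff j)) := by
  rw [coeff_divByMonic_X_sub_C]
  refine (tendsto_finsetSum (Finset.Icc (j + 1) q.natDegree) fun m _ =>
    (hx.pow (m - (j + 1))).mul (hcoeff m)).congr' ?_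
  filter_upwards [hdeg] with i hi
  rw [coeff_divByMonic_X_sub_C, hi]

theorem eventually_ne_zero_of_tendsto_coeff [Semiring R] [T1Space R]
    {p : ι → R[X]} {q : R[X]} (hq : q ≠ 0)
    (hcoeff : ∀ j, Tendsto (fun i => (p i).coeff j) l (𝓝 (q.coeff j))) : ∀ᶠ i in l, p i ≠ 0 :=
  ((hcoeff q.natDegree).eventually_ne (leadingCoeff_ne_zero.2 hq)).mono fun i hi h =>
    hi (by rw [h, coeff_zero])

end TopologicalRing

theorem tendsto_cauchyBound_of_tendsto_coeff {K : Type*} [NormedDivisionRing K]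
    {p : ι → K[X]} {q : K[X]} (hq : q ≠ 0)
    (hdeg : ∀ᶠ i in l, (p i).natDegree = q.natDegree)
    (hcoeff : ∀ j, Tendsto (fun i => (p i).coeff j) l (𝓝 (q.coeff j))) :
    Tendsto (fun i => (p i).cauchyBound) l (𝓝 q.cauchyBound) := by
  have hsup : Tendsto (fun i => (Finset.range q.natDegree).sup fun j => ‖(p i).coeff j‖₊) l
      (𝓝 ((Finset.range q.natDegree).sup fun j => ‖q.coeff j‖₊)) :=
    Tendsto.finset_sup_nhds_apply fun j _ => (hcoeff j).nnnorm
  have hlead : ‖q.leadingCoeff‖₊ ≠ 0 := by simpa using hq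
  refine ((hsup.div (hcoeff q.natDegree).nnnorm hlead).add_const 1).congr' ?_
  filter_upwards [hdeg] with i hi
  simp only [cauchyBound, leadingCoeff, hi, Pi.div_apply]

variable {K : Type*} [NormedField K] [ProperSpace K] {p : ι → K[X]} {q : K[X]}

theorem exists_ultrafilter_tendsto_of_isRoot [l.NeBot] {x : ι → K} (hq : q ≠ 0)
    (hdeg : ∀ᶠ i in l, (p i).natDegree = q.natDegree)
    (hcoeff : ∀ j, Tendsto (fun i => (p i).coeff j) l (𝓝 (q.coeff j)))
    (hroot : ∀ᶠ i in l, (p i).IsRoot (x i)) :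
    ∃ (u : Ultrafilter ι) (a : K), ↑u ≤ l ∧ Tendsto x u (𝓝 a) := by
  have hball : ∀ᶠ i in l, x i ∈ Metric.closedBall (0 : K) (q.cauchyBound + 1) := by
    have hbound := tendsto_cauchyBound_of_tendsto_coeff hq hdeg hcoeff
    filter_upwards [eventually_ne_zero_of_tendsto_coeff hq hcoeff, hroot,
      hbound.eventually_lt_const (lt_add_one _)] with i hpi hxi hboundi
    exact mem_closedBall_zero_iff.2
      (NNReal.coe_le_coe.2 ((hxi.norm_lt_cauchyBound hpi).trans hboundi).le)
  obtain ⟨a, -, ha⟩ := (isCompact_closedBall (0 : K) (q.cauchyBound + 1)).ultrafilter_le_nhds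
    ((Ultrafilter.of l).map x) (le_principal_iff.2 (Ultrafilter.of_le l hball))
  exact ⟨Ultrafilter.of l, a, Ultrafilter.of_le l, ha⟩

theorem le_card_roots_of_tendsto_coeff [l.NeBot] (hq : q ≠ 0)
    (hdeg : ∀ᶠ i in l, (p i).natDegree = q.natDegree)
    (hcoeff : ∀ j, Tendsto (fun i => (p i).coeff j) l (𝓝 (q.coeff j)))
    {k : ℕ} (hcard : ∀ᶠ i in l, k ≤ (p i).roots.card) : k ≤ q.roots.card := by
  induction k generalizing l p q with
  | zero => exact Nat.zero_le _
  | succ k ih =>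
    have hexists : ∀ᶠ i in l, ∃ y, (p i).IsRoot y := hcard.mono fun i hi =>
      (Multiset.card_pos_iff_exists_mem.1 (Nat.zero_lt_of_lt hi)).imp fun _ => isRoot_of_mem_roots
    obtain ⟨x, hx⟩ := hexists.choice
    obtain ⟨u, a, hul, hxa⟩ := exists_ultrafilter_tendsto_of_isRoot hq hdeg hcoeff hx
    replace hdeg := hdeg.filter_mono hul
    replace hcoeff := fun j => (hcoeff j).mono_left hul
    have ha : q.IsRoot a := tendsto_nhds_unique (tendsto_eval_of_tendsto_coeff hdeg hcoeff hxa)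
      (tendsto_const_nhds.congr' ((hx.filter_mono hul).mono fun _ hi => hi.symm))
    have hquot : q /ₘ (X - C a) ≠ 0 := fun h =>
      hq (by rw [← mul_divByMonic_eq_iff_isRoot.2 ha, h, mul_zero])
    rw [card_roots_eq_card_roots_divByMonic_add_one hq ha, Nat.add_le_add_iff_right]
    refine ih hquot ?_ (tendsto_coeff_divByMonic_X_sub_C hdeg hcoeff hxa) ?_
    · filter_upwards [hdeg] with i hi
      rw [natDegree_divByMonic _ (monic_X_sub_C _), natDegree_divByMonic _ (monic_X_sub_C _), hi,
        natDegree_X_sub_C, natDegree_X_sub_C]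
    · filter_upwards [hcard.filter_mono hul, eventually_ne_zero_of_tendsto_coeff hq hcoeff,
      hx.filter_mono hul] with i hi hpi hxi
      rwa [card_roots_eq_card_roots_divByMonic_add_one hpi hxi, Nat.add_le_add_iff_right] at hi

end CoefficientwiseLimit

section Strata

open Topology

variable {n : ℕ}

theorem degree_ppoly (a : Fin n → ℝ) : (Ppoly n a).degree = n := by
  have hlower : (∑ i : Fin n, C (a i) * X ^ (n - 1 - (i : ℕ))).degree < (X ^ n : ℝ[X]).degree := by
    rw [degree_X_pow, degree_lt_iff_coeff_zero]
    intro m hm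
    simp only [finsetSum_coeff, coeff_C_mul_X_pow]
    exact Finset.sum_eq_zero fun i _ => if_neg (by omega)
  rw [Ppoly, degree_add_eq_left_of_degree_lt hlower, degree_X_pow]

theorem natDegree_ppoly (a : Fin n → ℝ) : (Ppoly n a).natDegree = n :=
  natDegree_eq_of_degree_eq_some (degree_ppoly a)

theorem ppoly_ne_zero (a : Fin n → ℝ) : Ppoly n a ≠ 0 := by
  intro h
  simpa [h] using degree_ppoly a

theorem continuous_coeff_ppoly (j : ℕ) : Continuous fun a : Fin n → ℝ => (Ppoly n a).coeff j := by
  simp only [Ppoly, coeff_add, finsetSum_coeff, coeff_C_mul]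
  fun_prop

theorem sum_mv (a : Fin n → ℝ) : (MV n a).sum = (Ppoly n a).roots.card := by
  rw [← Multiset.toFinset_sum_count_eq]
  simp only [count_roots]
  rw [MV, ← List.sum_toFinset _ (Finset.sort_nodup _ _), Finset.sort_toFinset]

theorem card_roots_ppoly_of_mem_stratum {v : List ℕ} {a : Fin n → ℝ} (ha : a ∈ Stratum n v) :
    (Ppoly n a).roots.card = v.sum := by
  rw [← sum_mv, show MV n a = v from ha]

theorem le_card_roots_ppoly_of_mem_closure {s : Set (Fin n → ℝ)} {k : ℕ}
    (hs : ∀ b ∈ s, k ≤ (Ppoly n b).roots.card) {a : Fin n → ℝ} (ha : a ∈ closure s) :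
    k ≤ (Ppoly n a).roots.card := by
  have : (𝓝[s] a).NeBot := mem_closure_iff_nhdsWithin_neBot.1 ha
  exact le_card_roots_of_tendsto_coeff (ppoly_ne_zero a)
    (.of_forall fun b => (natDegree_ppoly b).trans (natDegree_ppoly a).symm)
    (fun j => (continuous_coeff_ppoly j).continuousWithinAt) (eventually_mem_nhdsWithin.mono hs)

theorem sum_le_of_mem_stratum {v : List ℕ} {a : Fin n → ℝ} (ha : a ∈ Stratum n v) :
    v.sum ≤ n := by
  simpa only [natDegree_ppoly, card_roots_ppoly_of_mem_stratum ha] using card_roots' (Ppoly n a)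

theorem even_sub_sum_of_mem_stratum {v : List ℕ} {a : Fin n → ℝ} (ha : a ∈ Stratum n v) :
    Even (n - v.sum) := by
  simpa only [natDegree_ppoly, card_roots_ppoly_of_mem_stratum ha] using
    even_natDegree_sub_card_roots (Ppoly n a)

end Strata

theorem length_of_adjacent_strata_general (n : ℕ) (v₁ v₂ : List ℕ)
    (h : (Stratum n v₁ ∩ closure (Stratum n v₂)).Nonempty) :
    v₂.sum ≤ v₁.sum ∧ Even (v₁.sum - v₂.sum) := by
  obtain ⟨a, ha, ha'⟩ := h
  obtain ⟨b, hb⟩ := closure_nonempty_iff.1 ⟨a, ha'⟩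
  have hle : v₂.sum ≤ v₁.sum := by
    rw [← card_roots_ppoly_of_mem_stratum ha]
    exact le_card_roots_ppoly_of_mem_closure
      (fun c hc => (card_roots_ppoly_of_mem_stratum hc).ge) ha'
  have hsub : v₁.sum - v₂.sum = (n - v₂.sum) - (n - v₁.sum) := by
    have := sum_le_of_mem_stratum ha
    omega
  refine ⟨hle, hsub ▸ ?_⟩
  exact (even_sub_sum_of_mem_stratum hb).tsub (even_sub_sum_of_mem_stratum ha)

/-- If `S_{v₁}` and `S_{v₂}` are nonempty strata and `S_{v₁}` is contained in the
closure of `S_{v₂}` in `ℝ^n`, then `l(v₁) ≥ l(v₂)` and `l(v₁) − l(v₂)` is even. -/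
theorem length_of_adjacent_strata (n : ℕ) (hn : 1 ≤ n) (v₁ v₂ : List ℕ)
    (hv₁ : ∀ m ∈ v₁, 0 < m) (hv₂ : ∀ m ∈ v₂, 0 < m)
    (hne₁ : (Stratum n v₁).Nonempty) (hne₂ : (Stratum n v₂).Nonempty)
    (hsub : Stratum n v₁ ⊆ closure (Stratum n v₂)) :
    v₂.sum ≤ v₁.sum ∧ Even (v₁.sum - v₂.sum) := by
  obtain ⟨a, ha⟩ := hne₁
  exact length_of_adjacent_strata_general n v₁ v₂ ⟨a, ha, hsub ha⟩
end

section
/- Let T = S_v be a nonempty stratum of dimension d = n − r(v) with d < n. A nonempty stratum S_w of dimension d + 1 (i.e. with r(w) = r(v) − 1) satisfies T ⊆ closure(S_w) if and only if w is obtained from v either by replacing some component m > 1 of v by two consecutive components m', m'' with m' ≥ 1, m'' ≥ 1 and m' + m'' = m, or by deleting from v a component equal to 2. -/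
open Polynomial

/-- `SplitOne v w` : `w` is obtained from `v` by replacing some component
`m > 1` by two consecutive components `m' ≥ 1`, `m'' ≥ 1` with `m' + m'' = m`. -/
def SplitOne (v w : List ℕ) : Prop :=
  ∃ (l₁ l₂ : List ℕ) (m m' m'' : ℕ), 1 < m ∧ 1 ≤ m' ∧ 1 ≤ m'' ∧ m' + m'' = m ∧
    v = l₁ ++ m :: l₂ ∧ w = l₁ ++ m' :: m'' :: l₂

/-- `DeleteTwo v w` : `w` is obtained from `v` by deleting a component equal
to `2`. -/
def DeleteTwo (v w : List ℕ) : Prop :=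
  ∃ l₁ l₂ : List ℕ, v = l₁ ++ 2 :: l₂ ∧ w = l₁ ++ l₂

/-!
Sufficiency is a perturbation: replace `(X - z) ^ (m' + m'')` by `(X - z) ^ m' * (X - x) ^ m''`
with `x ↓ z`, respectively `(X - z) ^ 2` by `(X - z) ^ 2 + e` with `e ↓ 0`.

For necessity, let polynomials with multiplicity vector `w` converge to one with multiplicity
vector `v`. Along an ultrafilter their real roots converge, being bounded in terms of the
coefficients, and hence so do their monic cofactors without real roots. Such cofactors are positive,
so their limit is nonnegative and its real roots have even multiplicity. Therefore every component
`m` of `v` breaks up into a block `b` of consecutive components of `w` with `m - b.sum` even and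
nonnegative. The surplus drops by `m - 1 - (b.sum - b.length) ≥ 0` in each block; it drops by `0`
only if `b = [m]`, and by `1` only if `b` has two components with sum `m`, or `m = 2` and `b = []`.
-/

open Filter Topology

section RootData

variable {R : Type*} [CommRing R]

/-- The polynomial `∏ (X - x) ^ m` over the entries `(x, m)` of `L`; the points `x` need not be
distinct. -/
noncomputable def rootsProd (L : List (R × ℕ)) : R[X] :=
  (L.map fun p => (X - C p.1) ^ p.2).prod

lemma rootsProd_cons (p : R × ℕ) (L : List (R × ℕ)) :
    rootsProd (p :: L) = (X - C p.1) ^ p.2 * rootsProd L := by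
  simp only [rootsProd, List.map_cons, List.prod_cons]

lemma rootsProd_append (L₁ L₂ : List (R × ℕ)) :
    rootsProd (L₁ ++ L₂) = rootsProd L₁ * rootsProd L₂ := by
  simp only [rootsProd, List.map_append, List.prod_append]

lemma rootsProd_ofFn {k : ℕ} (x : Fin k → R) (m : Fin k → ℕ) :
    rootsProd (List.ofFn fun j => (x j, m j)) = ∏ j, (X - C (x j)) ^ m j := by
  simp only [rootsProd, List.map_ofFn, List.prod_ofFn, Function.comp_apply]

lemma monic_rootsProd (L : List (R × ℕ)) : (rootsProd L).Monic := by
  induction L with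
  | nil => exact monic_one
  | cons p L ih =>
    rw [rootsProd_cons]
    exact ((monic_X_sub_C p.1).pow p.2).mul ih

lemma natDegree_rootsProd [Nontrivial R] (L : List (R × ℕ)) :
    (rootsProd L).natDegree = (L.map Prod.snd).sum := by
  induction L with
  | nil => exact natDegree_one
  | cons p L ih =>
    rw [rootsProd_cons, ((monic_X_sub_C p.1).pow p.2).natDegree_mul (monic_rootsProd L), ih,
      (monic_X_sub_C p.1).natDegree_pow, natDegree_X_sub_C, mul_one, List.map_cons, List.sum_cons]

variable [IsDomain R]

lemma isRoot_rootsProd_iff {L : List (R × ℕ)} (hL : ∀ p ∈ L, 0 < p.2) (x : R) :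
    (rootsProd L).IsRoot x ↔ x ∈ L.map Prod.fst := by
  induction L with
  | nil => simp [rootsProd]
  | cons p L ih =>
    rw [List.forall_mem_cons] at hL
    rw [rootsProd_cons, root_mul, ih hL.2, List.map_cons, List.mem_cons, IsRoot.def, eval_pow,
      pow_eq_zero_iff hL.1.ne', eval_sub, eval_X, eval_C, sub_eq_zero]

lemma rootMultiplicity_rootsProd [DecidableEq R] (L : List (R × ℕ)) (z : R) :
    (rootsProd L).rootMultiplicity z = ((L.filter (·.1 = z)).map Prod.snd).sum := by
  induction L with
  | nil => exact rootMultiplicity_eq_zero (by simp [rootsProd])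
  | cons p L ih =>
    have hp : ((X - C p.1) ^ p.2 : R[X]).rootMultiplicity z = if p.1 = z then p.2 else 0 := by
      classical
      rw [← count_roots, roots_pow, roots_X_sub_C, Multiset.count_nsmul, Multiset.count_singleton]
      simp [eq_comm]
    rw [rootsProd_cons, rootMultiplicity_mul
      (((monic_X_sub_C p.1).pow p.2).mul (monic_rootsProd L)).ne_zero, hp, ih, List.filter_cons]
    split_ifs <;> simp_all

variable [LinearOrder R]

/-- The multiplicities of the distinct roots of `p`, listed in increasing order of the roots. -/
noncomputable def multVec (p : R[X]) : List ℕ :=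
  (p.roots.toFinset.sort (· ≤ ·)).map fun x => p.rootMultiplicity x

/-- `L` lists points in strictly increasing order with positive multiplicities and `Q` is monic
without roots, so that `rootsProd L * Q` is the normal form of a monic polynomial in which its
roots and their multiplicities can be read off from `L`. -/
structure IsRootData (L : List (R × ℕ)) (Q : R[X]) : Prop where
  sorted : L.Pairwise (·.1 < ·.1)
  pos : ∀ p ∈ L, 0 < p.2
  monic : Q.Monic
  not_isRoot : ∀ x, ¬ Q.IsRoot x

namespace IsRootData

variable {L : List (R × ℕ)} {Q : R[X]}

lemma sort_roots (h : IsRootData L Q) :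
    (rootsProd L * Q).roots.toFinset.sort (· ≤ ·) = L.map Prod.fst := by
  have hsorted : (L.map Prod.fst).Pairwise (· < ·) := List.pairwise_map.2 h.sorted
  have hroots : (rootsProd L * Q).roots.toFinset = (L.map Prod.fst).toFinset := by
    ext x
    rw [Multiset.mem_toFinset, mem_roots ((monic_rootsProd L).mul h.monic).ne_zero, root_mul,
      or_iff_left (h.not_isRoot x), isRoot_rootsProd_iff h.pos, List.mem_toFinset]
  rw [hroots]
  exact (List.toFinset_sort _ hsorted.nodup).2 (hsorted.imp le_of_lt)

lemma rootMultiplicity_eq (h : IsRootData L Q) {p : R × ℕ} (hp : p ∈ L) :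
    (rootsProd L * Q).rootMultiplicity p.1 = p.2 := by
  obtain ⟨L₁, L₂, rfl⟩ := List.append_of_mem hp
  obtain ⟨-, hright, hleft⟩ := List.pairwise_append.1 h.sorted
  have hL₁ : L₁.filter (·.1 = p.1) = [] := by
    simpa using fun a b hab => (hleft (a, b) hab p List.mem_cons_self).ne
  have hL₂ : L₂.filter (·.1 = p.1) = [] := by
    simpa using fun a b hab => ((List.pairwise_cons.1 hright).1 (a, b) hab).ne'
  rw [rootMultiplicity_mul ((monic_rootsProd _).mul h.monic).ne_zero,
    rootMultiplicity_eq_zero (h.not_isRoot _), rootMultiplicity_rootsProd]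
  simp [hL₁, hL₂]

lemma multVec_eq (h : IsRootData L Q) : multVec (rootsProd L * Q) = L.map Prod.snd := by
  rw [multVec, h.sort_roots, List.map_map]
  exact List.map_congr_left fun p hp => h.rootMultiplicity_eq hp

lemma natDegree_eq (h : IsRootData L Q) :
    (rootsProd L * Q).natDegree = (L.map Prod.snd).sum + Q.natDegree := by
  rw [(monic_rootsProd L).natDegree_mul h.monic, natDegree_rootsProd]

end IsRootData

lemma exists_isRootData {p : R[X]} (hp : p.Monic) :
    ∃ L Q, IsRootData L Q ∧ rootsProd L * Q = p := by
  obtain ⟨Q, hQ, -, hroots⟩ := exists_prod_multiset_X_sub_C_mul p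
  have hQmonic : Q.Monic := (monic_multisetProd_X_sub_C p.roots).of_mul_monic_left (by rwa [hQ])
  refine ⟨(p.roots.toFinset.sort (· ≤ ·)).map fun x => (x, p.roots.count x), Q,
    ⟨?_, ?_, hQmonic, ?_⟩, ?_⟩
  · exact List.pairwise_map.2 p.roots.toFinset.sortedLT_sort.pairwise
  · rw [List.forall_mem_map]
    exact fun x hx => Multiset.count_pos.2 (Multiset.mem_toFinset.1 ((Finset.mem_sort _).1 hx))
  · intro x hx
    have hmem : x ∈ Q.roots := (mem_roots hQmonic.ne_zero).2 hx
    simp [hroots] at hmem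
  · rw [Finset.prod_multiset_map_count] at hQ
    rw [rootsProd, List.map_map, ← List.prod_toFinset _ (Finset.sort_nodup _ _),
      Finset.sort_toFinset]
    exact hQ

end RootData

lemma coeff_eq_coeff_mul_sub_of_monic {R : Type*} [Ring R] {g : R[X]} (hg : g.Monic) (h : R[X])
    (k : ℕ) :
    h.coeff k = (g * h).coeff (g.natDegree + k) -
      ∑ j ∈ Finset.range g.natDegree, g.coeff j * h.coeff (g.natDegree + k - j) := by
  have hmul : (g * h).coeff (g.natDegree + k) =
      ∑ j ∈ Finset.range (g.natDegree + 1), g.coeff j * h.coeff (g.natDegree + k - j) := by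
    rw [coeff_mul, Finset.Nat.sum_antidiagonal_eq_sum_range_succ fun a b => g.coeff a * h.coeff b]
    refine (Finset.sum_subset (Finset.range_mono (by lia)) fun j _ hj => ?_).symm
    rw [coeff_eq_zero_of_natDegree_lt (by simpa using hj), zero_mul]
  rw [hmul, Finset.sum_range_succ, hg.coeff_natDegree, one_mul, Nat.add_sub_cancel_left,
    add_sub_cancel_left]

section TendstoCoeff

variable {ι R : Type*} {l : Filter ι}

/-- Coefficientwise convergence of polynomials along a filter. -/
def TendstoCoeff [Semiring R] [TopologicalSpace R] (f : ι → R[X]) (l : Filter ι) (p : R[X]) :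
    Prop :=
  ∀ k, Tendsto (fun i => (f i).coeff k) l (𝓝 (p.coeff k))

namespace TendstoCoeff

section Semiring

variable [Semiring R] [TopologicalSpace R] {f g : ι → R[X]} {p q : R[X]}

lemma const (p : R[X]) : TendstoCoeff (fun _ : ι => p) l p := fun _ => tendsto_const_nhds

lemma C {c : ι → R} {a : R} (hc : Tendsto c l (𝓝 a)) :
    TendstoCoeff (fun i => Polynomial.C (c i)) l (Polynomial.C a) := by
  intro k
  simp only [coeff_C]
  split_ifs
  · exact hc
  · exact tendsto_const_nhds

lemma congr' (hf : TendstoCoeff f l p) (hfg : f =ᶠ[l] g) : TendstoCoeff g l p := fun k =>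
  (hf k).congr' (hfg.mono fun _ h => congrArg (coeff · k) h)

lemma mono {l' : Filter ι} (hf : TendstoCoeff f l p) (hl : l' ≤ l) : TendstoCoeff f l' p :=
  fun k => (hf k).mono_left hl

lemma unique [T2Space R] [l.NeBot] (hp : TendstoCoeff f l p) (hq : TendstoCoeff f l q) : p = q :=
  Polynomial.ext fun k => tendsto_nhds_unique (hp k) (hq k)

lemma exists_of_forall_coeff {N : ℕ} (hdeg : ∀ᶠ i in l, (f i).natDegree ≤ N)
    (hcoeff : ∀ k, ∃ c, Tendsto (fun i => (f i).coeff k) l (𝓝 c)) : ∃ p, TendstoCoeff f l p := by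
  choose c hc using hcoeff
  refine ⟨∑ k ∈ Finset.range (N + 1), monomial k (c k), fun k => ?_⟩
  simp only [finsetSum_coeff, coeff_monomial, Finset.sum_ite_eq', Finset.mem_range]
  split_ifs with hk
  · exact hc k
  · refine tendsto_const_nhds.congr' ?_
    filter_upwards [hdeg] with i hi
    exact (coeff_eq_zero_of_natDegree_lt (by lia)).symm

variable [IsTopologicalSemiring R]

lemma add (hf : TendstoCoeff f l p) (hg : TendstoCoeff g l q) :
    TendstoCoeff (fun i => f i + g i) l (p + q) := by
  intro k
  simp only [coeff_add]
  exact (hf k).add (hg k)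

lemma mul (hf : TendstoCoeff f l p) (hg : TendstoCoeff g l q) :
    TendstoCoeff (fun i => f i * g i) l (p * q) := by
  intro k
  simp only [coeff_mul]
  exact tendsto_finsetSum _ fun _ _ => (hf _).mul (hg _)

lemma pow (hf : TendstoCoeff f l p) (m : ℕ) : TendstoCoeff (fun i => f i ^ m) l (p ^ m) := by
  induction m with
  | zero => simpa only [pow_zero] using const 1
  | succ m ih => simpa only [pow_succ] using ih.mul hf

lemma eval (hf : TendstoCoeff f l p) {N : ℕ} (hdeg : ∀ᶠ i in l, (f i).natDegree ≤ N) (t : R) :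
    Tendsto (fun i => (f i).eval t) l (𝓝 (p.eval t)) := by
  set M := max N p.natDegree + 1
  rw [eval_eq_sum_range' (show p.natDegree < M by lia)]
  refine (tendsto_finsetSum (Finset.range M) fun k _ => (hf k).mul_const (t ^ k)).congr' ?_
  filter_upwards [hdeg] with i hi
  exact (eval_eq_sum_range' (by lia) t).symm

end Semiring

section CommRing

variable [CommRing R] [TopologicalSpace R] [IsTopologicalRing R]

lemma X_sub_C {x : ι → R} {y : R} (hx : Tendsto x l (𝓝 y)) :
    TendstoCoeff (fun i => X - Polynomial.C (x i)) l (X - Polynomial.C y) := by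
  simpa only [C_neg, ← sub_eq_add_neg] using (const X).add (C hx.neg)

lemma rootsProd_ofFn {k : ℕ} {x : ι → Fin k → R} {y : Fin k → R} (hx : Tendsto x l (𝓝 y))
    (m : Fin k → ℕ) :
    TendstoCoeff (fun i => rootsProd (List.ofFn fun j => (x i j, m j))) l
      (rootsProd (List.ofFn fun j => (y j, m j))) := by
  simp only [_root_.rootsProd_ofFn]
  induction (Finset.univ : Finset (Fin k)) using Finset.cons_induction with
  | empty => exact const 1
  | cons j s hj ih =>
    simpa only [Finset.prod_cons] using ((X_sub_C (tendsto_pi_nhds.1 hx j)).pow (m j)).mul ih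

variable {g h : ι → R[X]} {p q : R[X]} {d N : ℕ}

/-- The coefficients of the cofactor `h i` converge one after the other, from the top down, because
each of them is determined by the coefficients of `g i * h i` and the higher ones of `h i`. -/
lemma exists_of_monic_mul (hg : TendstoCoeff g l q)
    (hmonic : ∀ᶠ i in l, (g i).Monic ∧ (g i).natDegree = d)
    (hdeg : ∀ᶠ i in l, (h i).natDegree ≤ N) (hgh : TendstoCoeff (fun i => g i * h i) l p) :
    ∃ r, TendstoCoeff h l r := by
  suffices hcoeff : ∀ s k, N < k + s → ∃ c, Tendsto (fun i => (h i).coeff k) l (𝓝 c) from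
    exists_of_forall_coeff hdeg fun k => hcoeff (N + 1) k (by lia)
  intro s
  induction s with
  | zero =>
    refine fun k hk => ⟨0, tendsto_const_nhds.congr' ?_⟩
    filter_upwards [hdeg] with i hi
    exact (coeff_eq_zero_of_natDegree_lt (by lia)).symm
  | succ s ih =>
    intro k hk
    choose! c hc using ih
    refine ⟨_, ((hgh (d + k)).sub (tendsto_finsetSum (Finset.range d) fun j hj =>
      (hg j).mul (hc (d + k - j) (by have := Finset.mem_range.1 hj; lia)))).congr' ?_⟩
    filter_upwards [hmonic] with i ⟨hi, hd⟩
    rw [coeff_eq_coeff_mul_sub_of_monic hi (h i) k, hd]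

end CommRing

lemma exists_isRoot_norm_le {K : Type*} [NormedField K] {f : ι → K[X]} {p : K[X]} {n : ℕ}
    (hf : TendstoCoeff f l p) (hmonic : ∀ᶠ i in l, (f i).Monic ∧ (f i).natDegree = n) :
    ∃ B, ∀ᶠ i in l, ∀ x, (f i).IsRoot x → ‖x‖ ≤ B := by
  set M := (Finset.range n).sup fun k => ‖p.coeff k‖₊ + 1
  have hcoeff : ∀ᶠ i in l, ∀ k ∈ Finset.range n, ‖(f i).coeff k‖₊ ≤ M := by
    rw [Filter.eventually_all_finset]
    intro k hk
    have hM : ‖p.coeff k‖₊ + 1 ≤ M := Finset.le_sup (f := fun k => ‖p.coeff k‖₊ + 1) hk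
    filter_upwards [(hf k).nnnorm.eventually_le_const (lt_add_one _)] with i hi
    exact hi.trans hM
  refine ⟨M + 1, ?_⟩
  filter_upwards [hmonic, hcoeff] with i ⟨hi, hd⟩ hle x hx
  have hbound : cauchyBound (f i) ≤ M + 1 := by
    rw [cauchyBound, hi.leadingCoeff, nnnorm_one, div_one, hd]
    gcongr
    exact Finset.sup_le hle
  exact_mod_cast (IsRoot.norm_lt_cauchyBound hi.ne_zero hx).le.trans hbound

end TendstoCoeff

end TendstoCoeff

section Chart

variable {n : ℕ} {v w : List ℕ} {a : Fin n → ℝ}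

lemma degree_sum_C_mul_X_pow_lt (n : ℕ) (a : Fin n → ℝ) :
    (∑ i : Fin n, C (a i) * X ^ (n - 1 - (i : ℕ)) : ℝ[X]).degree < n := by
  refine (degree_sum_le _ _).trans_lt ((Finset.sup_lt_iff (WithBot.bot_lt_coe n)).2 fun i _ => ?_)
  exact (degree_C_mul_X_pow_le _ _).trans_lt (Nat.cast_lt.2 (by lia))

lemma monic_Ppoly (n : ℕ) (a : Fin n → ℝ) : (Ppoly n a).Monic :=
  monic_X_pow_add (degree_sum_C_mul_X_pow_lt n a)

lemma natDegree_Ppoly (n : ℕ) (a : Fin n → ℝ) : (Ppoly n a).natDegree = n := by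
  rw [Ppoly, natDegree_add_eq_left_of_degree_lt, natDegree_X_pow]
  rw [degree_X_pow]
  exact degree_sum_C_mul_X_pow_lt n a

/-- The coordinates of a monic polynomial of degree `n` in the space of the `a` in `Ppoly n a`:
coordinate `i` is the coefficient of `X ^ (n - 1 - i)`. -/
def coeffVec (n : ℕ) (p : ℝ[X]) : Fin n → ℝ := fun i => p.coeff (n - 1 - (i : ℕ))

lemma coeffVec_Ppoly (n : ℕ) (a : Fin n → ℝ) : coeffVec n (Ppoly n a) = a := by
  funext i
  have hexp (j : Fin n) : n - 1 - (i : ℕ) = n - 1 - (j : ℕ) ↔ i = j := by lia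
  have hlead : n - 1 - (i : ℕ) ≠ n := by lia
  simp [coeffVec, Ppoly, finsetSum_coeff, coeff_X_pow, hexp, hlead]

lemma Ppoly_coeffVec {p : ℝ[X]} (hp : p.Monic) :
    Ppoly p.natDegree (coeffVec p.natDegree p) = p := by
  conv_rhs => rw [hp.as_sum]
  rw [← Finset.sum_range_reflect, Finset.sum_range, Ppoly]
  rfl

lemma tendstoCoeff_Ppoly (a : Fin n → ℝ) : TendstoCoeff (Ppoly n) (𝓝 a) (Ppoly n a) := by
  intro k
  have hcont : Continuous fun b : Fin n → ℝ => (Ppoly n b).coeff k := by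
    simp only [Ppoly, coeff_add, finsetSum_coeff, coeff_C_mul]
    fun_prop
  exact hcont.tendsto a

lemma mem_stratum_iff : a ∈ Stratum n v ↔ multVec (Ppoly n a) = v := Iff.rfl

lemma exists_isRootData_of_mem_stratum {l₁ l₂ : List ℕ} {m : ℕ}
    (ha : a ∈ Stratum n (l₁ ++ m :: l₂)) :
    ∃ L₁ L₂ z Q, IsRootData (L₁ ++ (z, m) :: L₂) Q ∧
      rootsProd (L₁ ++ (z, m) :: L₂) * Q = Ppoly n a ∧
      L₁.map Prod.snd = l₁ ∧ L₂.map Prod.snd = l₂ := by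
  obtain ⟨L, Q, hLQ, hP⟩ := exists_isRootData (monic_Ppoly n a)
  have hL : L.map Prod.snd = l₁ ++ m :: l₂ := by
    rw [← hLQ.multVec_eq, hP, mem_stratum_iff.1 ha]
  obtain ⟨L₁, _, rfl, hl₁, htail⟩ := List.map_eq_append_iff.1 hL
  obtain ⟨⟨z, _⟩, L₂, rfl, rfl, hl₂⟩ := List.map_eq_cons_iff.1 htail
  exact ⟨L₁, L₂, z, Q, hLQ, hP, hl₁, hl₂⟩

lemma mem_closure_stratum_of_tendstoCoeff {ι : Type*} {l : Filter ι} [l.NeBot]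
    {L : ι → List (ℝ × ℕ)} {Q : ι → ℝ[X]}
    (hlim : TendstoCoeff (fun i => rootsProd (L i) * Q i) l (Ppoly n a))
    (hLQ : ∀ᶠ i in l, IsRootData (L i) (Q i)) (hw : ∀ i, (L i).map Prod.snd = w)
    (hdeg : ∀ i, w.sum + (Q i).natDegree = n) : a ∈ closure (Stratum n w) := by
  have hcoord : Tendsto (fun i => coeffVec n (rootsProd (L i) * Q i)) l (𝓝 a) := by
    conv_rhs => rw [← coeffVec_Ppoly n a]
    exact tendsto_pi_nhds.2 fun _ => hlim _
  refine mem_closure_of_tendsto hcoord ?_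
  filter_upwards [hLQ] with i hi
  have hn : (rootsProd (L i) * Q i).natDegree = n := by rw [hi.natDegree_eq, hw, hdeg]
  have hP := Ppoly_coeffVec ((monic_rootsProd (L i)).mul hi.monic)
  rw [hn] at hP
  rw [mem_stratum_iff, hP, hi.multVec_eq, hw]

end Chart

section Perturbation

variable {n : ℕ} {v w : List ℕ} {L₁ L₂ : List (ℝ × ℕ)} {z : ℝ} {Q : ℝ[X]}

lemma IsRootData.eventually_split {m₁ m₂ : ℕ} (h : IsRootData (L₁ ++ (z, m₁ + m₂) :: L₂) Q)
    (hm₁ : 1 ≤ m₁) (hm₂ : 1 ≤ m₂) :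
    ∀ᶠ x in 𝓝[>] z, IsRootData (L₁ ++ (z, m₁) :: (x, m₂) :: L₂) Q := by
  obtain ⟨hsorted, hpos, hmonic, hroot⟩ := h
  simp only [List.pairwise_append, List.pairwise_cons, List.forall_mem_cons] at hsorted
  obtain ⟨hL₁, ⟨hzL₂, hL₂⟩, hL₁₂⟩ := hsorted
  have hlt : ∀ᶠ x in 𝓝[>] z, ∀ p ∈ L₂, x < p.1 :=
    (eventually_all_finite L₂.finite_toSet).2 fun p hp =>
      (eventually_lt_nhds (hzL₂ p hp)).filter_mono nhdsWithin_le_nhds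
  filter_upwards [hlt, self_mem_nhdsWithin] with x hxL₂ (hzx : z < x)
  refine ⟨?_, ?_, hmonic, hroot⟩
  · simp only [List.pairwise_append, List.pairwise_cons, List.forall_mem_cons]
    exact ⟨hL₁, ⟨⟨hzx, hzL₂⟩, hxL₂, hL₂⟩, fun p hp =>
      ⟨(hL₁₂ p hp).1, (hL₁₂ p hp).1.trans hzx, (hL₁₂ p hp).2⟩⟩
  · simp only [List.forall_mem_append, List.forall_mem_cons] at hpos ⊢
    exact ⟨hpos.1, hm₁, hm₂, hpos.2.2⟩

lemma monic_X_sub_C_sq_add_C {R : Type*} [CommRing R] [Nontrivial R] (z e : R) :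
    ((X - C z) ^ 2 + C e).Monic := by
  have hsq : ((X - C z) ^ 2).Monic := (monic_X_sub_C z).pow 2
  refine hsq.add_of_left (degree_C_le.trans_lt (natDegree_pos_iff_degree_pos.1 ?_))
  simp [(monic_X_sub_C z).natDegree_pow]

lemma natDegree_X_sub_C_sq_add_C {R : Type*} [CommRing R] [Nontrivial R] (z e : R) :
    ((X - C z) ^ 2 + C e).natDegree = 2 := by
  rw [natDegree_add_C, (monic_X_sub_C z).natDegree_pow, natDegree_X_sub_C]

lemma IsRootData.delete {m : ℕ} {e : ℝ} (h : IsRootData (L₁ ++ (z, m) :: L₂) Q) (he : 0 < e) :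
    IsRootData (L₁ ++ L₂) (((X - C z) ^ 2 + C e) * Q) where
  sorted := h.sorted.sublist ((List.sublist_cons_self _ _).append_left _)
  pos p hp := h.pos p (((List.sublist_cons_self _ _).append_left _).subset hp)
  monic := (monic_X_sub_C_sq_add_C z e).mul h.monic
  not_isRoot x := by
    have hx : 0 < (x - z) ^ 2 + e := by positivity
    rw [root_mul, not_or]
    exact ⟨by simpa using hx.ne', h.not_isRoot x⟩

theorem SplitOne.stratum_subset_closure (h : SplitOne v w) :
    Stratum n v ⊆ closure (Stratum n w) := by
  obtain ⟨l₁, l₂, _, m₁, m₂, -, hm₁, hm₂, rfl, rfl, rfl⟩ := h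
  intro a ha
  obtain ⟨L₁, L₂, z, Q, hLQ, hP, rfl, rfl⟩ := exists_isRootData_of_mem_stratum ha
  have hdeg := congrArg natDegree hP
  rw [hLQ.natDegree_eq, natDegree_Ppoly] at hdeg
  have hlim : TendstoCoeff (fun x => rootsProd (L₁ ++ (z, m₁) :: (x, m₂) :: L₂) * Q) (𝓝[>] z)
      (Ppoly n a) := by
    have hx : Tendsto (fun x : ℝ => x) (𝓝[>] z) (𝓝 z) := nhdsWithin_le_nhds
    simp only [← hP, rootsProd_append, rootsProd_cons, pow_add, mul_assoc]
    exact (TendstoCoeff.const _).mul ((TendstoCoeff.const _).mul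
      (((TendstoCoeff.X_sub_C hx).pow m₂).mul (TendstoCoeff.const _)))
  refine mem_closure_stratum_of_tendstoCoeff hlim (hLQ.eventually_split hm₁ hm₂)
    (fun x => by simp) fun x => ?_
  simpa [add_assoc] using hdeg

theorem DeleteTwo.stratum_subset_closure (h : DeleteTwo v w) :
    Stratum n v ⊆ closure (Stratum n w) := by
  obtain ⟨l₁, l₂, rfl, rfl⟩ := h
  intro a ha
  obtain ⟨L₁, L₂, z, Q, hLQ, hP, rfl, rfl⟩ := exists_isRootData_of_mem_stratum ha
  have hdeg := congrArg natDegree hP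
  rw [hLQ.natDegree_eq, natDegree_Ppoly] at hdeg
  have hlim : TendstoCoeff (fun e => rootsProd (L₁ ++ L₂) * (((X - C z) ^ 2 + C e) * Q)) (𝓝[>] 0)
      (Ppoly n a) := by
    have he : Tendsto (fun e : ℝ => e) (𝓝[>] 0) (𝓝 0) := nhdsWithin_le_nhds
    have hP' : rootsProd (L₁ ++ L₂) * (((X - C z) ^ 2 + C 0) * Q) = Ppoly n a := by
      rw [← hP, rootsProd_append, rootsProd_append, rootsProd_cons, C_0, add_zero]
      ring
    rw [← hP']
    exact (TendstoCoeff.const _).mul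
      (((TendstoCoeff.const _).add (TendstoCoeff.C he)).mul (TendstoCoeff.const _))
  refine mem_closure_stratum_of_tendstoCoeff hlim ?_ (fun _ => List.map_append) fun e => ?_
  · filter_upwards [self_mem_nhdsWithin] with e he
    exact hLQ.delete he
  · rw [(monic_X_sub_C_sq_add_C z e).natDegree_mul hLQ.monic, natDegree_X_sub_C_sq_add_C, ← hdeg]
    simp only [List.map_append, List.map_cons, List.sum_append, List.sum_cons]
    ring

end Perturbation

section Parity

variable {Q : ℝ[X]}

lemma eval_pos_of_monic_of_not_isRoot (hQ : Q.Monic) (hroot : ∀ x, ¬ Q.IsRoot x) (t : ℝ) :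
    0 < Q.eval t := by
  by_contra! hneg
  rcases le_or_gt Q.degree 0 with hdeg | hdeg
  · rw [hQ.degree_le_zero_iff_eq_one.1 hdeg, eval_one] at hneg
    exact hneg.not_gt one_pos
  · have htop := tendsto_atTop_of_leadingCoeff_nonneg Q hdeg (by simp [hQ.leadingCoeff])
    obtain ⟨s, hs⟩ := (htop.eventually_ge_atTop 0).exists
    obtain ⟨x, hx⟩ := mem_range_of_exists_le_of_exists_ge Q.continuous ⟨t, hneg⟩ ⟨s, hs⟩
    exact hroot x hx

lemma even_rootMultiplicity_of_eval_nonneg (hQ : Q ≠ 0) (hnonneg : ∀ t, 0 ≤ Q.eval t) (z : ℝ) :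
    Even (Q.rootMultiplicity z) := by
  obtain ⟨S, hS, hdvd⟩ := exists_eq_pow_rootMultiplicity_mul_and_not_dvd Q hQ z
  set k := Q.rootMultiplicity z
  have heval (t : ℝ) : 0 ≤ (t - z) ^ k * S.eval t := by
    have ht := hnonneg t
    rwa [hS, eval_mul, eval_pow, eval_sub, eval_X, eval_C] at ht
  have hlim (s : Set ℝ) : Tendsto (fun t => S.eval t) (𝓝[s] z) (𝓝 (S.eval z)) :=
    S.continuous.continuousWithinAt
  by_contra hodd
  rw [Nat.not_even_iff_odd] at hodd
  have hle : S.eval z ≤ 0 := by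
    refine le_of_tendsto (hlim (Set.Iio z)) ?_
    filter_upwards [self_mem_nhdsWithin] with t ht
    exact nonpos_of_mul_nonneg_right (heval t) (hodd.pow_neg (sub_neg.2 ht))
  have hge : 0 ≤ S.eval z := by
    refine ge_of_tendsto (hlim (Set.Ioi z)) ?_
    filter_upwards [self_mem_nhdsWithin] with t ht
    exact nonneg_of_mul_nonneg_right (heval t) (pow_pos (sub_pos.2 ht) k)
  exact hdvd (dvd_iff_isRoot.2 (hle.antisymm hge))

end Parity

section Limit

variable {ι : Type*} {n : ℕ} {w : List ℕ} {f : ι → ℝ[X]} {p : ℝ[X]}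

lemma exists_isRootData_ofFn {R : Type*} [CommRing R] [IsDomain R] [LinearOrder R] {p : R[X]}
    (hp : p.Monic) (hw : multVec p = w) :
    ∃ (x : Fin w.length → R) (Q : R[X]), IsRootData (List.ofFn fun j => (x j, w.get j)) Q ∧
      rootsProd (List.ofFn fun j => (x j, w.get j)) * Q = p := by
  obtain ⟨L, Q, hLQ, rfl⟩ := exists_isRootData hp
  rw [hLQ.multVec_eq] at hw
  subst hw
  let x (j : Fin (L.map Prod.snd).length) : R := (L.get (j.cast (L.length_map _))).1
  have hL : (List.ofFn fun j => (x j, (L.map Prod.snd).get j)) = L :=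
    List.ext_getElem (by simp) (by simp [x])
  exact ⟨x, Q, by rwa [hL], by rw [hL]⟩

lemma TendstoCoeff.exists_tendsto_roots {u : Ultrafilter ι} (hf : TendstoCoeff f u p)
    (hmonic : ∀ᶠ i in u, (f i).Monic ∧ (f i).natDegree = n) {k : ℕ} {x : ι → Fin k → ℝ}
    (hx : ∀ᶠ i in u, ∀ j, (f i).IsRoot (x i j)) : ∃ y, Tendsto x u (𝓝 y) := by
  obtain ⟨B, hB⟩ := hf.exists_isRoot_norm_le hmonic
  have hball : ∀ᶠ i in u, x i ∈ Metric.closedBall 0 (max B 0) := by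
    filter_upwards [hx, hB] with i hi hBi
    rw [mem_closedBall_zero_iff, pi_norm_le_iff_of_nonneg (le_max_right B 0)]
    exact fun j => (hBi _ (hi j)).trans (le_max_left B 0)
  obtain ⟨y, -, hy⟩ := (isCompact_closedBall 0 (max B 0)).ultrafilter_le_nhds (u.map x)
    (le_principal_iff.2 hball)
  exact ⟨y, hy⟩

section RootDataLimit

variable {u : Ultrafilter ι} {k : ℕ} {m : Fin k → ℕ} {x : ι → Fin k → ℝ} {Q : ι → ℝ[X]}

lemma TendstoCoeff.exists_tendsto_rootData
    (hlim : TendstoCoeff (fun i => rootsProd (List.ofFn fun j => (x i j, m j)) * Q i) u p)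
    (hdata : ∀ᶠ i in u, IsRootData (List.ofFn fun j => (x i j, m j)) (Q i))
    (hQdeg : ∀ᶠ i in u, (Q i).natDegree = n) :
    ∃ y S, Tendsto x u (𝓝 y) ∧ TendstoCoeff Q u S := by
  have hprodDeg (i : ι) : (rootsProd (List.ofFn fun j => (x i j, m j))).natDegree =
      (List.ofFn m).sum := by
    rw [natDegree_rootsProd, List.map_ofFn]
    rfl
  have hmonic : ∀ᶠ i in u, (rootsProd (List.ofFn fun j => (x i j, m j)) * Q i).Monic ∧
      (rootsProd (List.ofFn fun j => (x i j, m j)) * Q i).natDegree = (List.ofFn m).sum + n := by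
    filter_upwards [hdata, hQdeg] with i hi hn
    refine ⟨(monic_rootsProd _).mul hi.monic, ?_⟩
    rw [(monic_rootsProd _).natDegree_mul hi.monic, hprodDeg, hn]
  have hroots : ∀ᶠ i in u, ∀ j,
      (rootsProd (List.ofFn fun j => (x i j, m j)) * Q i).IsRoot (x i j) := by
    filter_upwards [hdata] with i hi j
    exact root_mul_right_of_isRoot _ ((isRoot_rootsProd_iff hi.pos _).2 (by simp))
  obtain ⟨y, hy⟩ := hlim.exists_tendsto_roots hmonic hroots
  obtain ⟨S, hS⟩ := (TendstoCoeff.rootsProd_ofFn hy m).exists_of_monic_mul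
    (.of_forall fun i => ⟨monic_rootsProd _, hprodDeg i⟩) (hQdeg.mono fun _ => le_of_eq) hlim
  exact ⟨y, S, hy, hS⟩

lemma TendstoCoeff.exists_monotone_rootsProd_mul_nonneg
    (hlim : TendstoCoeff (fun i => rootsProd (List.ofFn fun j => (x i j, m j)) * Q i) u p)
    (hdata : ∀ᶠ i in u, IsRootData (List.ofFn fun j => (x i j, m j)) (Q i))
    (hQdeg : ∀ᶠ i in u, (Q i).natDegree = n) :
    ∃ y S, Monotone y ∧ (∀ t, 0 ≤ S.eval t) ∧
      rootsProd (List.ofFn fun j => (y j, m j)) * S = p := by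
  obtain ⟨y, S, hy, hS⟩ := hlim.exists_tendsto_rootData hdata hQdeg
  refine ⟨y, S, fun j₁ j₂ hj => ?_, fun t => ?_,
    ((TendstoCoeff.rootsProd_ofFn hy m).mul hS).unique hlim⟩
  · rw [tendsto_pi_nhds] at hy
    refine le_of_tendsto_of_tendsto (hy j₁) (hy j₂) ?_
    filter_upwards [hdata] with i hi
    have hmono : StrictMono (x i) := fun _ _ h => List.pairwise_ofFn.1 hi.sorted h
    exact hmono.monotone hj
  · refine ge_of_tendsto (hS.eval (hQdeg.mono fun _ => le_of_eq) t) ?_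
    filter_upwards [hdata] with i hi
    exact (eval_pos_of_monic_of_not_isRoot hi.monic hi.not_isRoot t).le

end RootDataLimit

lemma exists_rootsProd_mul_nonneg_of_mem_closure {a : Fin n → ℝ} (ha : a ∈ closure (Stratum n w)) :
    ∃ L S, L.Pairwise (·.1 ≤ ·.1) ∧ (∀ q ∈ L, 0 < q.2) ∧ L.map Prod.snd = w ∧
      (∀ t, 0 ≤ S.eval t) ∧ rootsProd L * S = Ppoly n a := by
  obtain ⟨u, hu, hua⟩ := mem_closure_iff_ultrafilter.1 ha
  choose! x Q hdata hprod using fun b (hb : b ∈ Stratum n w) =>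
    exists_isRootData_ofFn (monic_Ppoly n b) hb
  have hmem : ∀ᶠ b in u, b ∈ Stratum n w := hu
  have hlim : TendstoCoeff (fun b => rootsProd (List.ofFn fun j => (x b j, w.get j)) * Q b) u
      (Ppoly n a) :=
    ((tendstoCoeff_Ppoly a).mono hua).congr' (hmem.mono fun b hb => (hprod b hb).symm)
  have hQdeg : ∀ᶠ b in u, (Q b).natDegree = n - w.sum := by
    filter_upwards [hmem] with b hb
    have hdeg := (hdata b hb).natDegree_eq
    rw [hprod b hb, natDegree_Ppoly, List.map_ofFn,
      show Prod.snd ∘ (fun j => (x b j, w.get j)) = w.get from rfl, List.ofFn_get] at hdeg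
    lia
  obtain ⟨y, S, hy, hS, hP⟩ := hlim.exists_monotone_rootsProd_mul_nonneg (hmem.mono hdata) hQdeg
  obtain ⟨b, hb⟩ := hmem.exists
  refine ⟨_, S, List.pairwise_ofFn.2 fun i j hij => hy hij.le, ?_, ?_, hS, hP⟩
  · simpa [List.forall_mem_ofFn_iff] using (hdata b hb).pos
  · rw [List.map_ofFn]
    exact List.ofFn_get w

end Limit

section Combinatorics

/-- A real root of multiplicity `m` may break up into real roots of multiplicities `b` together
with pairs of complex conjugate roots. -/
structure Resolves (m : ℕ) (b : List ℕ) : Prop where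
  pos : 0 < m
  parts_pos : ∀ k ∈ b, 0 < k
  exists_pairs : ∃ c, m = b.sum + 2 * c

/-- `w` is obtained from `v` by resolving every component of `v`. -/
inductive Deforms : List ℕ → List ℕ → Prop
  | nil : Deforms [] []
  | cons {m : ℕ} {b v w : List ℕ} : Resolves m b → Deforms v w → Deforms (m :: v) (b ++ w)

variable {m : ℕ} {b v w : List ℕ}

lemma Deforms.map_flatMap {α : Type*} {f : α → ℕ} {g : α → List ℕ} {zs : List α}
    (h : ∀ z ∈ zs, Resolves (f z) (g z)) : Deforms (zs.map f) (zs.flatMap g) := by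
  induction zs with
  | nil => exact .nil
  | cons z zs ih =>
    rw [List.forall_mem_cons] at h
    exact .cons h.1 (ih h.2)

namespace Resolves

lemma sum_add_one_le (h : Resolves m b) : b.sum + 1 ≤ m + b.length := by
  obtain ⟨hm, -, c, hc⟩ := h
  cases b with
  | nil => simpa using Nat.one_le_iff_ne_zero.2 hm.ne'
  | cons k b =>
    rw [List.length_cons]
    lia

lemma eq_singleton (h : Resolves m b) (hb : m + b.length = b.sum + 1) : b = [m] := by
  obtain ⟨-, hpos, c, hc⟩ := h
  rcases b with _ | ⟨k, _ | ⟨l, b⟩⟩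
  · simp only [List.length_nil, List.sum_nil] at hb hc
    lia
  · simpa using hb.symm
  · simp only [List.length_cons] at hb
    lia

lemma eq_nil_or_eq_pair (h : Resolves m b) (hb : m + b.length = b.sum + 2) :
    (m = 2 ∧ b = []) ∨ ∃ k l, 1 ≤ k ∧ 1 ≤ l ∧ k + l = m ∧ b = [k, l] := by
  obtain ⟨-, hpos, c, hc⟩ := h
  rcases b with _ | ⟨k, _ | ⟨l, _ | ⟨r, b⟩⟩⟩
  · exact .inl ⟨by simpa using hb, rfl⟩
  · simp only [List.length_singleton, List.sum_singleton] at hb hc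
    lia
  · simp only [List.length_cons, List.length_nil, List.sum_cons, List.sum_nil] at hb
    exact .inr ⟨k, l, hpos k (by simp), hpos l (by simp), by lia, rfl⟩
  · simp only [List.length_cons, List.sum_cons] at hb hc
    lia

end Resolves

namespace Deforms

lemma sum_add_length_le (h : Deforms v w) : w.sum + v.length ≤ v.sum + w.length := by
  induction h with
  | nil => rfl
  | cons hb _ ih =>
    have := hb.sum_add_one_le
    simp only [List.sum_append, List.length_append, List.sum_cons, List.length_cons]
    lia

lemma eq_of_sum_add_length_eq (h : Deforms v w) (hvw : v.sum + w.length = w.sum + v.length) :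
    w = v := by
  induction h with
  | nil => rfl
  | cons hb htail ih =>
    have := hb.sum_add_one_le
    have := htail.sum_add_length_le
    simp only [List.sum_append, List.length_append, List.sum_cons, List.length_cons] at hvw
    rw [hb.eq_singleton (by lia), ih (by lia), List.singleton_append]

end Deforms

lemma SplitOne.cons (h : SplitOne v w) (m : ℕ) : SplitOne (m :: v) (m :: w) := by
  obtain ⟨l₁, l₂, k, k', k'', hk, hk', hk'', hsum, rfl, rfl⟩ := h
  exact ⟨m :: l₁, l₂, k, k', k'', hk, hk', hk'', hsum, rfl, rfl⟩

lemma DeleteTwo.cons (h : DeleteTwo v w) (m : ℕ) : DeleteTwo (m :: v) (m :: w) := by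
  obtain ⟨l₁, l₂, rfl, rfl⟩ := h
  exact ⟨m :: l₁, l₂, rfl, rfl⟩

lemma Resolves.splitOne_or_deleteTwo (h : Resolves m b) (hb : m + b.length = b.sum + 2)
    (v : List ℕ) : SplitOne (m :: v) (b ++ v) ∨ DeleteTwo (m :: v) (b ++ v) := by
  rcases h.eq_nil_or_eq_pair hb with ⟨rfl, rfl⟩ | ⟨k, l, hk, hl, rfl, rfl⟩
  · exact .inr ⟨[], v, rfl, rfl⟩
  · exact .inl ⟨[], v, k + l, k, l, by lia, hk, hl, rfl, rfl, rfl⟩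

theorem Deforms.splitOne_or_deleteTwo (h : Deforms v w)
    (hvw : v.sum + w.length = w.sum + v.length + 1) : SplitOne v w ∨ DeleteTwo v w := by
  induction h with
  | nil => simp at hvw
  | @cons m b v w hb htail ih =>
    have hb_le := hb.sum_add_one_le
    have htail_le := htail.sum_add_length_le
    simp only [List.sum_append, List.length_append, List.sum_cons, List.length_cons] at hvw
    rcases hb_le.eq_or_lt with hb_eq | hb_lt
    · rw [hb.eq_singleton hb_eq.symm]
      exact (ih (by lia)).imp (·.cons m) (·.cons m)
    · rw [htail.eq_of_sum_add_length_eq (by lia)]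
      exact hb.splitOne_or_deleteTwo (by lia) v

end Combinatorics

section Necessity

variable {n : ℕ} {v w : List ℕ}

lemma eq_flatMap_filter_of_pairwise {α β : Type*} [LinearOrder β] {f : α → β} {zs : List β}
    {L : List α} (hzs : zs.Pairwise (· < ·)) (hL : L.Pairwise (f · ≤ f ·))
    (hmem : ∀ q ∈ L, f q ∈ zs) : L = zs.flatMap fun z => L.filter (f · = z) := by
  induction L with
  | nil => simp
  | cons q L ih =>
    rw [List.pairwise_cons] at hL
    rw [List.forall_mem_cons] at hmem
    obtain ⟨s, t, rfl⟩ := List.append_of_mem hmem.1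
    obtain ⟨-, hqt, hsq⟩ := List.pairwise_append.1 hzs
    have hs (z : β) (hz : z ∈ s) : (q :: L).filter (f · = z) = [] := by
      have hzq : z < f q := hsq z hz _ List.mem_cons_self
      simp only [List.filter_eq_nil_iff, List.forall_mem_cons, decide_eq_true_eq]
      exact ⟨hzq.ne', fun r hr => (hzq.trans_le (hL.1 r hr)).ne'⟩
    have hs' (z : β) (hz : z ∈ s) : L.filter (f · = z) = [] :=
      List.sublist_nil.1 (hs z hz ▸ (List.sublist_cons_self q L).filter _)
    have ht (z : β) (hz : z ∈ t) : (q :: L).filter (f · = z) = L.filter (f · = z) :=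
      List.filter_cons_of_neg (by simpa using ((List.pairwise_cons.1 hqt).1 z hz).ne)
    have ih := ih hL.2 hmem.2
    rw [List.flatMap_append, List.flatMap_eq_nil_iff.2 hs', List.nil_append,
      List.flatMap_cons] at ih
    rw [List.flatMap_append, List.flatMap_eq_nil_iff.2 hs, List.nil_append, List.flatMap_cons,
      List.flatMap_congr ht, List.filter_cons_of_pos (by simp), List.cons_append, ← ih]

lemma deforms_multVec {p S : ℝ[X]} {L : List (ℝ × ℕ)} (hp : p ≠ 0) (hL : L.Pairwise (·.1 ≤ ·.1))
    (hpos : ∀ q ∈ L, 0 < q.2) (hS : ∀ t, 0 ≤ S.eval t) (hLS : rootsProd L * S = p) :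
    Deforms (multVec p) (L.map Prod.snd) := by
  have hS0 : S ≠ 0 := right_ne_zero_of_mul (hLS ▸ hp)
  have hblocks : L.map Prod.snd = (p.roots.toFinset.sort (· ≤ ·)).flatMap
      fun z => (L.filter (·.1 = z)).map Prod.snd := by
    rw [← List.map_flatMap, ← eq_flatMap_filter_of_pairwise
      p.roots.toFinset.sortedLT_sort.pairwise hL]
    intro q hq
    rw [Finset.mem_sort, Multiset.mem_toFinset, mem_roots hp, ← hLS]
    exact root_mul_right_of_isRoot S
      ((isRoot_rootsProd_iff hpos q.1).2 (List.mem_map_of_mem hq))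
  rw [hblocks, multVec]
  refine Deforms.map_flatMap fun z hz => ⟨?_, ?_, ?_⟩
  · rw [Finset.mem_sort, Multiset.mem_toFinset] at hz
    exact (rootMultiplicity_pos hp).2 (isRoot_of_mem_roots hz)
  · rw [List.forall_mem_map]
    exact fun q hq => hpos q (List.mem_of_mem_filter hq)
  · obtain ⟨c, hc⟩ := even_rootMultiplicity_of_eval_nonneg hS0 hS z
    refine ⟨c, ?_⟩
    rw [← hLS, rootMultiplicity_mul (hLS ▸ hp), rootMultiplicity_rootsProd, hc, two_mul]

theorem deforms_of_mem_stratum_of_mem_closure {a : Fin n → ℝ} (hav : a ∈ Stratum n v)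
    (haw : a ∈ closure (Stratum n w)) : Deforms v w := by
  obtain ⟨L, S, hL, hpos, rfl, hS, hP⟩ := exists_rootsProd_mul_nonneg_of_mem_closure haw
  rw [← mem_stratum_iff.1 hav]
  exact deforms_multVec (monic_Ppoly n a).ne_zero hL hpos hS hP

end Necessity

/-- Let `T = S_v` be a nonempty stratum of dimension `d = n − r(v) < n`.  A
nonempty stratum `S_w` of dimension `d + 1` (i.e. with `r(w) = r(v) − 1`)
satisfies `T ⊆ closure (S_w)` iff `w` is obtained from `v` either by replacing a
component `m > 1` by two components `m' ≥ 1`, `m'' ≥ 1` with `m' + m'' = m`, or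
by deleting a component equal to `2`. -/
theorem adjacency_codim_one (n : ℕ) (hn : 1 ≤ n) (v w : List ℕ)
    (hv : ∀ m ∈ v, 0 < m) (hw : ∀ m ∈ w, 0 < m)
    (hnev : (Stratum n v).Nonempty) (hnew : (Stratum n w).Nonempty)
    (hd : 0 < v.sum - v.length)
    (hr : v.sum - v.length = (w.sum - w.length) + 1) :
    Stratum n v ⊆ closure (Stratum n w) ↔ SplitOne v w ∨ DeleteTwo v w := by
  have hw_le := List.length_le_sum_of_one_le w hw
  constructor
  · intro hvw
    obtain ⟨a, ha⟩ := hnev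
    have hdeforms := deforms_of_mem_stratum_of_mem_closure ha (hvw ha)
    exact hdeforms.splitOne_or_deleteTwo (by lia)
  · rintro (hsplit | hdelete)
    · exact hsplit.stratum_subset_closure
    · exact hdelete.stratum_subset_closure
end
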